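/- arXiv:math/0201003 — 2 statements merged into one kernel-verified Lean document; each statement's English description precedes it below -/
import Mathlib

section
/- For any rim hook tableau T of shape λ (of arbitrary type), the sign of its zero permutation satisfies sign(π_T) = (−1)^{ht(T)}. -/
open scoped BigOperators

namespace RimHookPaper

/-- A partition: a weakly decreasing, eventually-zero sequence of naturals;
`parts n` is the `(n+1)`-st part. -/
structure Partition : Type where
  parts : ℕ → ℕ
  antitone : ∀ ⦃i j : ℕ⦄, i ≤ j → parts j ≤ parts i
  eventually_zero : ∃ N : ℕ, ∀ i : ℕ, N ≤ i → parts i = 0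

namespace Partition

/-- The size `|λ|` of a partition. -/
noncomputable def size (P : Partition) : ℕ := ∑ᶠ i, P.parts i

/-- The empty partition. -/
def empty : Partition := ⟨fun _ => 0, fun _ _ _ => le_rfl, ⟨0, fun _ _ => rfl⟩⟩

/-- The number of nonzero parts of a partition. -/
noncomputable def length (P : Partition) : ℕ := sInf {N | P.parts N = 0}

/-- The cells of the Young diagram of a partition. -/
def cells (P : Partition) : Set (ℕ × ℕ) := {c | c.2 < P.parts c.1}

instance : LE Partition := ⟨fun Q P => ∀ i, Q.parts i ≤ P.parts i⟩

/-- The skew shape `P / Q` (as a set of cells). -/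
def skew (P Q : Partition) : Set (ℕ × ℕ) := P.cells \ Q.cells

end Partition

/-- Edge-adjacency of cells. -/
def Adj (c d : ℕ × ℕ) : Prop :=
  (c.1 = d.1 ∧ (c.2 + 1 = d.2 ∨ d.2 + 1 = c.2)) ∨
    (c.2 = d.2 ∧ (c.1 + 1 = d.1 ∨ d.1 + 1 = c.1))

/-- A set of cells is (edge-)connected. -/
def IsConnectedSet (S : Set (ℕ × ℕ)) : Prop :=
  ∀ c ∈ S, ∀ d ∈ S, Relation.ReflTransGen (fun x y => x ∈ S ∧ y ∈ S ∧ Adj x y) c d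

/-- `S` contains no 2×2 square. -/
def NoSquare (S : Set (ℕ × ℕ)) : Prop :=
  ¬ ∃ i j : ℕ, (i, j) ∈ S ∧ (i + 1, j) ∈ S ∧ (i, j + 1) ∈ S ∧ (i + 1, j + 1) ∈ S

/-- `P / Q` is a rim hook (border strip) of length `t`: a nonempty connected skew
shape with no 2×2 square, consisting of `t` boxes. -/
def IsRimHook (P Q : Partition) (t : ℕ) : Prop :=
  Q ≤ P ∧ (P.skew Q).Nonempty ∧ IsConnectedSet (P.skew Q) ∧ NoSquare (P.skew Q) ∧
    (P.skew Q).ncard = t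

/-- One step of a rim hook tableau: an empty hook (`t = 0`) or a rim hook of length `t`. -/
def IsStep (P Q : Partition) (t : ℕ) : Prop :=
  (t = 0 ∧ P = Q) ∨ (0 < t ∧ IsRimHook P Q t)

/-- Number of rows met by a set of cells. -/
noncomputable def rowCount (S : Set (ℕ × ℕ)) : ℕ := (Prod.fst '' S).ncard

/-- A rim hook tableau of shape `P` and type `μ`: a chain
`∅ = λ⁰ ⊆ λ¹ ⊆ ⋯ ⊆ λʳ = P` with each `λⁱ/λⁱ⁻¹` a (possibly empty)
rim hook of length `μᵢ`. -/
structure RHT (P : Partition) (μ : List ℕ) : Type where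
  chain : Fin (μ.length + 1) → Partition
  chain_zero : chain 0 = Partition.empty
  chain_last : chain (Fin.last μ.length) = P
  step : ∀ j : Fin μ.length, IsStep (chain j.succ) (chain j.castSucc) (μ.get j)

/-- The total height of a rim hook tableau: the sum of the heights
(number of rows minus one) of its nonempty rim hooks. -/
noncomputable def RHT.height {P : Partition} {μ : List ℕ} (T : RHT P μ) : ℕ :=
  ∑ j : Fin μ.length, (rowCount ((T.chain j.succ).skew (T.chain j.castSucc)) - 1)

/-- The character value `χ^λ_μ` of the symmetric group, via the
Murnaghan–Nakayama rule. -/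
noncomputable def chiAux (P : Partition) (μ : List ℕ) : ℤ :=
  ∑ᶠ T : RHT P μ, (-1 : ℤ) ^ T.height

/-- The parts of a multiset, listed in weakly decreasing order. -/
def typeList (μ : Multiset ℕ) : List ℕ := (μ.sort (· ≤ ·)).reverse

/-- `χ^λ_μ` for a multiset type `μ`. -/
noncomputable def chi (P : Partition) (μ : Multiset ℕ) : ℤ := chiAux P (typeList μ)

/-- `z_μ = ∏_j m_j! · j^{m_j}` where `μ` has `m_j` parts equal to `j`. -/
def zpart (μ : Multiset ℕ) : ℕ := μ.prod * ∏ j ∈ μ.toFinset, (μ.count j).factorial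

/-- `χ^λ(σ)`: the character evaluated at a permutation, via its full cycle type
(including fixed points as parts equal to 1). -/
noncomputable def chiPerm (P : Partition) {m : ℕ} (σ : Equiv.Perm (Fin m)) : ℤ :=
  chi P (σ.cycleType + Multiset.replicate (m - σ.cycleType.sum) 1)

/-- Position of the zero (up step) corresponding to row `n` in the 0/1 sequence
`s(P)`, where the median of `s(P)` is the gap just below position `0`. -/
def zpos (P : Partition) (n : ℕ) : ℤ := (P.parts n : ℤ) - (n : ℤ) - 1

/-- `s(P)` has a `0` (an up step) at position `x`; otherwise it has a `1`. -/
def isZeroAt (P : Partition) (x : ℤ) : Prop := ∃ n : ℕ, zpos P n = x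

/-- `Q` is the `k`-quotient of `P`: for each residue `i`, the 0/1 sequence of `Q i`
is (up to the shift `d` recording the position of its median) the subsequence of
`s(P)` consisting of every `k`-th digit, including the `(i+1)`-st digit after the
median of `s(P)`. -/
def IsKQuotient (k : ℕ) (P : Partition) (Q : Fin k → Partition) : Prop :=
  ∀ i : Fin k, ∃ d : ℤ, ∀ j : ℤ,
    isZeroAt (Q i) j ↔ isZeroAt P (((i : ℕ) : ℤ) + (j + d) * (k : ℤ))

/-- `C` is the `k`-core of `P`: it is obtained from `P` by successively removing
rim hooks of length `k`, as long as possible. -/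
def IsKCore (k : ℕ) (P C : Partition) : Prop :=
  Relation.ReflTransGen (fun A B => IsRimHook A B k) P C ∧ ¬ ∃ C', IsRimHook C C' k

/-- The map on row indices induced by moving the zero in row `m` down (left)
to row `m'`, the zeros in rows `m+1,…,m'` each moving up one row. -/
def cycleFun (m m' n : ℕ) : ℕ :=
  if n = m then m' else if m < n ∧ n ≤ m' then n - 1 else n

/-- One tracking step for the zero permutation: passing from `A` to `B` by removing
a rim hook, encoded on the 0/1 sequence as interchanging a `1` with a later `0`
(the moved zero, in row `m` of `A`, jumps over `m' - m` zeros, landing in row `m'`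
of `B`); the row of each labeled zero is updated by `cycleFun m m'`. -/
def StepTrack (A B : Partition) (f g : ℕ → ℕ) : Prop :=
  (A = B ∧ g = f) ∨
    ∃ m m' : ℕ, m ≤ m' ∧
      (∀ n, n < m → zpos B n = zpos A n) ∧
      (∀ n, m ≤ n → n < m' → zpos B n = zpos A (n + 1)) ∧
      (∀ n, m' < n → zpos B n = zpos A n) ∧
      g = fun i => cycleFun m m' (f i)

/-- `π` is the zero permutation of the rim hook tableau `T`: label the zeros of
`s(P)` succeeding the first one by `1,…,ℓ(P)` from left to right (`q j i` is the
row of label `i+1` at stage `j` of the peeling, rows counted from the top), peel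
the rim hooks of `T` in order of decreasing entries, and read off the labels in
the final sequence `s(∅)` from left to right. -/
def IsZeroPerm {P : Partition} {μ : List ℕ} (T : RHT P μ)
    (π : Equiv.Perm (Fin P.length)) : Prop :=
  ∃ q : Fin (μ.length + 1) → ℕ → ℕ,
    (∀ i : ℕ, i < P.length → q (Fin.last μ.length) i = P.length - 1 - i) ∧
    (∀ j : Fin μ.length,
      StepTrack (T.chain j.succ) (T.chain j.castSucc) (q j.succ) (q j.castSucc)) ∧
    (∀ i : Fin P.length, q 0 ((π i : ℕ)) = P.length - 1 - (i : ℕ))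

/-- `ω(T) = (T₁,…,T_k)`: the rim hook tableau `T` (all of whose hook lengths are
divisible by `k`) decomposes into the `k`-tuple of rim hook tableaux `Ti` on the
`k`-quotient: each step of `T`, removing a hook of length `k·t`, affects exactly
one subsequence (mod `k`) of the 0/1 sequence, i.e. removes a hook of length `t`
from exactly one of the quotient partitions. -/
def OmegaRel (k : ℕ) {P : Partition} {κ : List ℕ} (T : RHT P κ)
    {Q : Fin k → Partition} {ν : Fin k → List ℕ}
    (Ti : ∀ i : Fin k, RHT (Q i) (ν i)) : Prop :=
  ∃ (QC : Fin (κ.length + 1) → Fin k → Partition) (a : Fin κ.length → Fin k),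
    (∀ j, IsKQuotient k (T.chain j) (QC j)) ∧
    (∀ j : Fin κ.length, ∀ i, i ≠ a j → QC j.castSucc i = QC j.succ i) ∧
    (∀ j : Fin κ.length, ∃ t : ℕ, κ.get j = k * t ∧
      IsStep (QC j.succ (a j)) (QC j.castSucc (a j)) t) ∧
    (∀ i : Fin k, ∃ e : Fin (ν i).length → Fin κ.length,
      StrictMono e ∧ (∀ s, a (e s) = i) ∧ (∀ j, a j = i → ∃ s, e s = j) ∧
      (∀ s, k * (ν i).get s = κ.get (e s)) ∧
      (Ti i).chain 0 = QC 0 i ∧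
      (∀ s : Fin (ν i).length, (Ti i).chain s.succ = QC (Fin.succ (e s)) i))

/-!
Removing a rim hook moves the zero of some row `m` down to a row `m' ≥ m`, the zeros in between
each going up one row: the rows are permuted by a cycle of length `m' - m + 1`, of sign
`(-1) ^ (m' - m)`. The removed cells meet exactly the rows `m, …, m'`, so `m' - m` is the height of
the hook. Hence the composite `σ` of these cycles has sign `(-1) ^ ht(T)`. Labels are numbered
against the order of the rows both before and after the removals, so `π_T` is the conjugate of
`σ⁻¹` by the reversal of the rows, and has the same sign.
-/

namespace Partition

variable {P Q : Partition}

theorem parts_eq_zero_of_length_le {n : ℕ} (h : P.length ≤ n) : P.parts n = 0 := by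
  obtain ⟨N, hN⟩ := P.eventually_zero
  have parts_length : P.parts P.length = 0 :=
    Nat.sInf_mem (s := {N | P.parts N = 0}) ⟨N, hN N le_rfl⟩
  exact Nat.le_zero.mp (parts_length ▸ P.antitone h)

theorem length_le_length (h : Q ≤ P) : Q.length ≤ P.length :=
  Nat.sInf_le (Nat.le_zero.mp ((h _).trans_eq (parts_eq_zero_of_length_le le_rfl)))

theorem fst_image_skew (P Q : Partition) :
    Prod.fst '' P.skew Q = {n | Q.parts n < P.parts n} := by
  ext n
  simp only [skew, cells, Set.mem_image, Set.mem_sdiff, Set.mem_ofPred_eq, not_lt, Prod.exists,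
    exists_and_right, exists_eq_right]
  exact ⟨fun ⟨_, hP, hQ⟩ => hQ.trans_lt hP, fun h => ⟨Q.parts n, h, le_rfl⟩⟩

end Partition

theorem IsStep.le {P Q : Partition} {t : ℕ} (h : IsStep P Q t) : Q ≤ P := by
  rcases h with ⟨-, rfl⟩ | ⟨-, hle, -⟩
  · exact fun _ => le_rfl
  · exact hle

/-- Passing from `A` to `B` moves the zero in row `m` of `s(A)` to row `m'`, each zero in the rows
`m + 1, …, m'` going up one row: the effect on 0/1 sequences of removing a rim hook. -/
structure ZeroMove (A B : Partition) (m m' : ℕ) : Prop where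
  above : ∀ n, n < m → zpos B n = zpos A n
  between : ∀ n, m ≤ n → n < m' → zpos B n = zpos A (n + 1)
  below : ∀ n, m' < n → zpos B n = zpos A n

namespace ZeroMove

variable {A B : Partition} {m m' n : ℕ}

theorem parts_eq (h : ZeroMove A B m m') (hn : n < m ∨ m' < n) : B.parts n = A.parts n := by
  have hz : zpos B n = zpos A n := hn.elim (h.above n) (h.below n)
  unfold zpos at hz
  lia

theorem parts_add_one_eq (h : ZeroMove A B m m') (hm : m ≤ n) (hm' : n < m') :
    B.parts n + 1 = A.parts (n + 1) := by
  have hz := h.between n hm hm'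
  unfold zpos at hz
  lia

theorem parts_pos (h : ZeroMove A B m m') (hlt : m < m') : 0 < A.parts m' := by
  obtain ⟨k, rfl⟩ := Nat.exists_eq_add_one_of_ne_zero hlt.ne_bot
  exact h.parts_add_one_eq (Nat.le_of_lt_succ hlt) k.lt_succ_self ▸ Nat.succ_pos _

theorem lt_length (h : ZeroMove A B m m') (hlt : m < m') : m' < A.length := by
  by_contra! hle
  exact (h.parts_pos hlt).ne' (Partition.parts_eq_zero_of_length_le hle)

theorem parts_lt_parts_iff (h : ZeroMove A B m m') (hlt : m < m') :
    B.parts n < A.parts n ↔ n ∈ Set.Icc m m' := by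
  refine ⟨fun hn => ?_, fun ⟨hm, hm'⟩ => ?_⟩
  · by_contra hout
    rw [Set.mem_Icc] at hout
    exact hn.ne (h.parts_eq (by lia))
  · rcases hm'.lt_or_eq with hnm' | rfl
    · have hshift := h.parts_add_one_eq hm hnm'
      have hanti := A.antitone n.le_succ
      lia
    · obtain ⟨k, rfl⟩ := Nat.exists_eq_add_one_of_ne_zero hlt.ne_bot
      have hshift := h.parts_add_one_eq (Nat.le_of_lt_succ hlt) k.lt_succ_self
      have hanti := B.antitone k.le_succ
      lia

theorem rowCount_skew_sub_one (h : ZeroMove A B m m') : rowCount (A.skew B) - 1 = m' - m := by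
  rw [rowCount, Partition.fst_image_skew]
  rcases lt_or_ge m m' with hlt | hge
  · have hrows : {n | B.parts n < A.parts n} = Finset.Icc m m' := by
      ext n
      simpa using h.parts_lt_parts_iff hlt
    rw [hrows, Set.ncard_coe_finset, Nat.card_Icc]
    lia
  · have hrows : {n | B.parts n < A.parts n} ⊆ {m} := fun n (hn : B.parts n < A.parts n) => by
      by_contra hne
      rw [Set.mem_singleton_iff] at hne
      exact hn.ne (h.parts_eq (by lia))
    have hcard := Set.ncard_le_ncard hrows
    rw [Set.ncard_singleton] at hcard
    lia

end ZeroMove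

theorem cycleFun_self (m n : ℕ) : cycleFun m m n = n := by
  unfold cycleFun
  split_ifs <;> lia

theorem cycleFun_cycleIcc {L : ℕ} {a b : Fin L} (hab : a ≤ b) (x : Fin L) :
    cycleFun a b (Fin.cycleIcc a b x) = x := by
  have : NeZero L := ⟨x.pos.ne'⟩
  rcases lt_or_ge x a with hxa | hax
  · rw [Fin.cycleIcc_of_lt hxa, cycleFun, if_neg (by lia), if_neg (by lia)]
  · rcases lt_trichotomy x b with hxb | rfl | hbx
    · rw [Fin.cycleIcc_of_ge_of_lt hax hxb, cycleFun, Fin.val_add_one_of_lt' (by lia),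
        if_neg (by lia), if_pos (by lia), Nat.add_sub_cancel]
    · rw [Fin.cycleIcc_of_last hax, cycleFun, if_pos rfl]
    · rw [Fin.cycleIcc_of_gt hbx, cycleFun, if_neg (by lia), if_neg (by lia)]

theorem coe_cycleIcc_symm {L : ℕ} {a b : Fin L} (hab : a ≤ b) (x : Fin L) :
    ((Fin.cycleIcc a b).symm x : ℕ) = cycleFun a b x := by
  rw [← cycleFun_cycleIcc hab, Equiv.apply_symm_apply]

/-- The labels placed in the first `L` rows by `f` are placed by `g` in those same rows, up to a
permutation of the rows of sign `ε`. Labels that `f` places further down are unconstrained. -/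
def RowsPermuted (L : ℕ) (ε : ℤˣ) (f g : ℕ → ℕ) : Prop :=
  ∃ σ : Equiv.Perm (Fin L), Equiv.Perm.sign σ = ε ∧ ∀ i (x : Fin L), f i = x → g i = σ x

namespace RowsPermuted

variable {L : ℕ}

theorem refl (f : ℕ → ℕ) : RowsPermuted L 1 f f :=
  ⟨1, map_one _, fun _ _ h => h⟩

theorem trans {ε ε' : ℤˣ} {f g k : ℕ → ℕ} (hfg : RowsPermuted L ε f g)
    (hgk : RowsPermuted L ε' g k) : RowsPermuted L (ε' * ε) f k := by
  obtain ⟨σ, rfl, hσ⟩ := hfg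
  obtain ⟨τ, rfl, hτ⟩ := hgk
  exact ⟨τ * σ, map_mul _ _ _, fun i x hi => hτ i (σ x) (hσ i x hi)⟩

theorem prod {r : ℕ} {q : Fin (r + 1) → ℕ → ℕ} {ε : Fin r → ℤˣ}
    (h : ∀ j, RowsPermuted L (ε j) (q j.succ) (q j.castSucc)) :
    RowsPermuted L (∏ j, ε j) (q (Fin.last r)) (q 0) := by
  induction r with
  | zero => exact refl _
  | succ r ih =>
    rw [Fin.prod_univ_succ]
    exact (ih (q := fun j => q j.succ) fun j => h j.succ).trans (h 0)

theorem cycleFun_comp {m m' : ℕ} (hm : m ≤ m') (hL : m' < L) (f : ℕ → ℕ) :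
    RowsPermuted L ((-1) ^ (m' - m)) f (cycleFun m m' ∘ f) := by
  have hab : (⟨m, hm.trans_lt hL⟩ : Fin L) ≤ ⟨m', hL⟩ := hm
  refine ⟨(Fin.cycleIcc ⟨m, hm.trans_lt hL⟩ ⟨m', hL⟩).symm, ?_, fun i x hi => ?_⟩
  · rw [Equiv.Perm.sign_symm, Fin.sign_cycleIcc_of_le hab]
  · rw [coe_cycleIcc_symm hab, Function.comp_apply, hi]

theorem sign_eq {ε : ℤˣ} {f g : ℕ → ℕ} {π e : Equiv.Perm (Fin L)} (h : RowsPermuted L ε f g)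
    (hf : ∀ i : Fin L, f i = e i) (hg : ∀ i : Fin L, g (π i) = e i) :
    Equiv.Perm.sign π = ε := by
  obtain ⟨σ, rfl, hσ⟩ := h
  have hcomp (i : Fin L) : σ (e (π i)) = e i := by
    rw [Fin.ext_iff, ← hσ _ _ (hf _), hg]
  have hconj : e.permCongr π = σ.symm := by
    ext1 x
    rw [Equiv.permCongr_apply, Equiv.eq_symm_apply, hcomp, Equiv.apply_symm_apply]
  rw [← Equiv.Perm.sign_permCongr e, hconj, Equiv.Perm.sign_symm]

end RowsPermuted

theorem StepTrack.rowsPermuted {A B : Partition} {f g : ℕ → ℕ} {L : ℕ} (h : StepTrack A B f g)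
    (hL : A.length ≤ L) : RowsPermuted L ((-1) ^ (rowCount (A.skew B) - 1)) f g := by
  rcases h with ⟨rfl, rfl⟩ | ⟨m, m', hm, above, between, below, rfl⟩
  · simpa [rowCount, Partition.skew] using RowsPermuted.refl g
  · have hmove : ZeroMove A B m m' := ⟨above, between, below⟩
    rw [hmove.rowCount_skew_sub_one]
    rcases hm.eq_or_lt with rfl | hlt
    · simpa [cycleFun_self] using RowsPermuted.refl f
    · exact .cycleFun_comp hm ((hmove.lt_length hlt).trans_le hL) f

/-- Rim hook tableaux of skew shape `c r / c 0`, with `L` labelled zeros: rows of length zero carry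
labels too when `L` exceeds the number of nonzero parts. -/
theorem sign_zeroPerm_eq_neg_one_pow_height_general {r L : ℕ} {c : Fin (r + 1) → Partition}
    (hc : ∀ j : Fin r, c j.castSucc ≤ c j.succ) (hL : (c (Fin.last r)).length ≤ L)
    {q : Fin (r + 1) → ℕ → ℕ} (hlast : ∀ i < L, q (Fin.last r) i = L - 1 - i)
    (hstep : ∀ j : Fin r, StepTrack (c j.succ) (c j.castSucc) (q j.succ) (q j.castSucc))
    {π : Equiv.Perm (Fin L)} (hzero : ∀ i : Fin L, q 0 (π i) = L - 1 - i) :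
    Equiv.Perm.sign π = (-1) ^ ∑ j : Fin r, (rowCount ((c j.succ).skew (c j.castSucc)) - 1) := by
  have hlength : ∀ j, (c j).length ≤ L := fun j => by
    induction j using Fin.reverseInduction with
    | last => exact hL
    | cast j ih => exact (Partition.length_le_length (hc j)).trans ih
  have coe_revPerm (i : Fin L) : (Fin.revPerm i : ℕ) = L - 1 - i := by
    rw [Fin.revPerm_apply, Fin.val_rev, Nat.sub_sub, Nat.add_comm]
  rw [← Finset.prod_pow_eq_pow_sum]
  have hperm := RowsPermuted.prod fun j => (hstep j).rowsPermuted (hlength j.succ)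
  exact hperm.sign_eq (e := Fin.revPerm)
    (fun i => (hlast i i.isLt).trans (coe_revPerm i).symm)
    (fun i => (hzero i).trans (coe_revPerm i).symm)

/-- for any rim hook tableau `T` of shape `λ` (of arbitrary type),
the sign of its zero permutation is `(−1)^{ht(T)}`. -/
theorem sign_zeroPerm_eq_neg_one_pow_height (P : Partition) (μ : List ℕ)
    (T : RHT P μ) (π : Equiv.Perm (Fin P.length)) (h : IsZeroPerm T π) :
    Equiv.Perm.sign π = (-1 : ℤˣ) ^ T.height := by
  obtain ⟨q, hlast, hstep, hzero⟩ := h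
  exact sign_zeroPerm_eq_neg_one_pow_height_general (fun j => (T.step j).le)
    (by rw [T.chain_last]) hlast hstep hzero

end RimHookPaper
end

section
/- Let k ≥ 2 and let λ be a partition with empty k-core, and set p := |λ|/k. Then the zero permutation π_T is the same for all rim hook tableaux T of shape λ and type (k^p); this common permutation is denoted π_λ. -/
open scoped BigOperators

namespace RimHookPaper

/-! Removing a rim hook of length `k` moves a single zero of the 0/1 sequence `k` positions to the
left. So every labeled zero keeps its position modulo `k`, and since it never jumps over a zero
in its own residue class, the relative order inside each class is preserved as well. In
`s(∅)` the zeros of each class therefore carry the labels of that class in their original order,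
whichever tableau was peeled. -/

section Residues

variable {ι κ : Type*} {k : ℤ} {x y z : ι → ℤ}

/-- The displacement of beads from positions `x` to positions `y` (indexed by the labels of the
beads) keeps every bead in its residue class modulo `k` and keeps the order of the beads inside
each class. This is the invariant of peeling rim hooks of length `k`. -/
structure ResidueOrderPreserving (k : ℤ) (x y : ι → ℤ) : Prop where
  modEq : ∀ i, y i ≡ x i [ZMOD k]
  lt : ∀ ⦃i j⦄, x i ≡ x j [ZMOD k] → x i < x j → y i < y j

namespace ResidueOrderPreserving

theorem refl (k : ℤ) (x : ι → ℤ) : ResidueOrderPreserving k x x :=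
  ⟨fun _ => Int.ModEq.rfl, fun _ _ _ hlt => hlt⟩

theorem trans (hxy : ResidueOrderPreserving k x y) (hyz : ResidueOrderPreserving k y z) :
    ResidueOrderPreserving k x z where
  modEq i := (hyz.modEq i).trans (hxy.modEq i)
  lt i j hmod hlt :=
    hyz.lt ((hxy.modEq i).trans (hmod.trans (hxy.modEq j).symm)) (hxy.lt hmod hlt)

theorem symm (hxy : ResidueOrderPreserving k x y) (hx : Function.Injective x) :
    ResidueOrderPreserving k y x where
  modEq i := (hxy.modEq i).symm
  lt i j hmod hlt := by
    have hmod' : x j ≡ x i [ZMOD k] :=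
      (hxy.modEq j).symm.trans (hmod.symm.trans (hxy.modEq i))
    have hne : x j ≠ x i := fun heq => hlt.ne' (congrArg y (hx heq))
    by_contra hle
    exact hlt.asymm (hxy.lt hmod' (lt_of_le_of_ne (not_lt.mp hle) hne))

theorem comp (hxy : ResidueOrderPreserving k x y) (e : κ → ι) :
    ResidueOrderPreserving k (x ∘ e) (y ∘ e) :=
  ⟨fun i => hxy.modEq (e i), fun _ _ hmod hlt => hxy.lt hmod hlt⟩

theorem of_shift_one (a : ℤ) (hy : ∀ i, y i = if x i = a then x i - k else x i)
    (hinj : ∀ i j, y i = y j → x i = x j) : ResidueOrderPreserving k x y where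
  modEq i := by
    rw [hy]
    split_ifs
    · exact Int.sub_modulus_modEq_iff.mpr rfl
    · rfl
  lt i j hmod hlt := by
    have hgap : |k| ≤ x j - x i :=
      Int.le_of_dvd (sub_pos.mpr hlt) ((abs_dvd _ _).mpr hmod.dvd)
    have hk := le_abs_self k
    have hk' := neg_abs_le k
    have hle : y i ≤ y j := by
      rw [hy, hy]
      split_ifs <;> omega
    exact lt_of_le_of_ne hle fun heq => hlt.ne (hinj i j heq)

end ResidueOrderPreserving

theorem perm_eq_one_of_strictMono_on_fibers {α β : Type*} [LinearOrder α] [WellFoundedLT α]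
    (r : α → β) (σ : Equiv.Perm α) (hr : ∀ a, r (σ a) = r a)
    (hσ : ∀ ⦃a b⦄, r a = r b → a < b → σ a < σ b) : σ = 1 := by
  ext a
  let τ : Equiv.Perm {b // r b = r a} := σ.subtypePerm fun b => by rw [hr b]
  have hτ : StrictMono τ := fun b c hlt => hσ (b.2.trans c.2.symm) hlt
  have hrefl : hτ.orderIsoOfSurjective τ τ.surjective = OrderIso.refl _ := Subsingleton.elim _ _
  exact congrArg Subtype.val (DFunLike.congr_fun hrefl ⟨a, rfl⟩)

theorem ResidueOrderPreserving.perm_eq_one {α : Type*} [LinearOrder α] [WellFoundedLT α]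
    {u : α → ℤ} (hu : StrictMono u) {σ : Equiv.Perm α}
    (h : ResidueOrderPreserving k u (u ∘ σ)) : σ = 1 :=
  perm_eq_one_of_strictMono_on_fibers (fun a => u a % k) σ h.modEq fun _ _ hmod hlt =>
    hu.lt_iff_lt.mp (h.lt hmod (hu hlt))

end Residues

theorem zpos_strictAnti (P : Partition) : StrictAnti (zpos P) := fun m n hmn => by
  have := P.antitone hmn.le
  unfold zpos
  omega

theorem ncard_skew (P Q : Partition) (N : ℕ) (hN : ∀ n, N ≤ n → P.parts n ≤ Q.parts n) :
    (P.skew Q).ncard = ∑ n ∈ Finset.range N, (P.parts n - Q.parts n) := by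
  have hcells : P.skew Q = ↑(((Finset.range N).sigma
      fun n => Finset.Ico (Q.parts n) (P.parts n)).map
      (Equiv.sigmaEquivProd ℕ ℕ).toEmbedding) := by
    ext ⟨i, j⟩
    have := hN i
    simp only [Partition.skew, Partition.cells, Set.mem_sdiff, Set.mem_ofPred_eq, Finset.mem_coe,
      Finset.mem_map_equiv, Finset.mem_sigma, Equiv.sigmaEquivProd, Equiv.coe_fn_symm_mk,
      Finset.mem_range, Finset.mem_Ico]
    omega
  simp only [hcells, Set.ncard_coe_finset, Finset.card_map, Finset.card_sigma, Nat.card_Ico]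

theorem ncard_skew_eq_sum_zpos {P Q : Partition} (hQP : Q ≤ P) (N : ℕ)
    (hN : ∀ n, N ≤ n → zpos Q n = zpos P n) :
    ((P.skew Q).ncard : ℤ) = ∑ n ∈ Finset.range N, (zpos P n - zpos Q n) := by
  have hparts : ∀ n, N ≤ n → P.parts n ≤ Q.parts n := fun n hn => by
    have := hN n hn
    unfold zpos at this
    omega
  rw [ncard_skew P Q N hparts, Nat.cast_sum]
  refine Finset.sum_congr rfl fun n _ => ?_
  rw [Nat.cast_sub (hQP n), zpos, zpos]
  ring

theorem IsStep.ncard_skew {P Q : Partition} {t : ℕ} (h : IsStep P Q t) :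
    (P.skew Q).ncard = t := by
  rcases h with ⟨rfl, rfl⟩ | ⟨-, -, -, -, -, hcard⟩
  · simp [Partition.skew]
  · exact hcard

theorem cycleFun_injective {m m' : ℕ} (hmm' : m ≤ m') : Function.Injective (cycleFun m m') := by
  intro a b
  unfold cycleFun
  split_ifs <;> omega

theorem sum_range_comp_cycleFun {M : Type*} [AddCommMonoid M] {m m' : ℕ} (hmm' : m ≤ m')
    (u : ℕ → M) :
    ∑ n ∈ Finset.range (m' + 1), u (cycleFun m m' n) = ∑ n ∈ Finset.range (m' + 1), u n := by
  have hmaps : Set.MapsTo (cycleFun m m') (Finset.range (m' + 1)) (Finset.range (m' + 1)) := by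
    intro n hn
    simp only [Finset.coe_range, Set.mem_Iio, cycleFun] at hn ⊢
    split_ifs <;> omega
  have hinj := (cycleFun_injective hmm').injOn (s := Finset.range (m' + 1))
  exact Finset.sum_nbij _ hmaps hinj (Finset.surjOn_of_injOn_of_card_le _ hmaps hinj le_rfl)
    fun _ _ => rfl

section StepTrack

variable {A B : Partition} {f g : ℕ → ℕ}

theorem zpos_cycleFun_of_ne {m m' n : ℕ}
    (hlow : ∀ n, n < m → zpos B n = zpos A n)
    (hmid : ∀ n, m ≤ n → n < m' → zpos B n = zpos A (n + 1))
    (hhigh : ∀ n, m' < n → zpos B n = zpos A n) (hn : n ≠ m) :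
    zpos B (cycleFun m m' n) = zpos A n := by
  rw [cycleFun, if_neg hn]
  split_ifs with hbetween
  · rw [hmid (n - 1) (by omega) (by omega), Nat.sub_add_cancel (by omega)]
  · rcases lt_or_gt_of_ne hn with hlt | hgt
    · exact hlow n hlt
    · exact hhigh n (by omega)

theorem zpos_cycleFun_self {m m' : ℕ} (hBA : B ≤ A) (hmm' : m ≤ m')
    (hne : ∀ n, n ≠ m → zpos B (cycleFun m m' n) = zpos A n)
    (hhigh : ∀ n, m' < n → zpos B n = zpos A n) :
    zpos B (cycleFun m m' m) = zpos A m - (A.skew B).ncard := by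
  have hcard : ((A.skew B).ncard : ℤ) = zpos A m - zpos B (cycleFun m m' m) := calc
    _ = ∑ n ∈ Finset.range (m' + 1), (zpos A n - zpos B n) :=
      ncard_skew_eq_sum_zpos hBA (m' + 1) hhigh
    _ = ∑ n ∈ Finset.range (m' + 1), (zpos A n - zpos B (cycleFun m m' n)) := by
      rw [Finset.sum_sub_distrib, Finset.sum_sub_distrib, sum_range_comp_cycleFun hmm']
    _ = zpos A m - zpos B (cycleFun m m' m) :=
      Finset.sum_eq_single_of_mem m (Finset.mem_range.mpr (Nat.lt_succ_of_le hmm'))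
        fun n _ hnm => by rw [hne n hnm, sub_self]
  rw [hcard, sub_sub_cancel]

theorem StepTrack.exists_zpos_eq (h : StepTrack A B f g) (hBA : B ≤ A) :
    ∃ a : ℤ, ∀ i, zpos B (g i) =
      if zpos A (f i) = a then zpos A (f i) - (A.skew B).ncard else zpos A (f i) := by
  rcases h with ⟨rfl, rfl⟩ | ⟨m, m', hmm', hlow, hmid, hhigh, rfl⟩
  · exact ⟨0, by simp [Partition.skew]⟩
  · have hne : ∀ n, n ≠ m → zpos B (cycleFun m m' n) = zpos A n := fun n =>
      zpos_cycleFun_of_ne hlow hmid hhigh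
    refine ⟨zpos A m, fun i => ?_⟩
    simp only [(zpos_strictAnti A).injective.eq_iff]
    split_ifs with hi
    · rw [hi, zpos_cycleFun_self hBA hmm' hne hhigh]
    · exact hne _ hi

theorem StepTrack.row_eq_of_row_eq (h : StepTrack A B f g) {i j : ℕ} (hij : g i = g j) :
    f i = f j := by
  rcases h with ⟨-, rfl⟩ | ⟨m, m', hmm', -, -, -, rfl⟩
  · exact hij
  · exact cycleFun_injective hmm' hij

theorem StepTrack.residueOrderPreserving {k : ℕ} (h : StepTrack A B f g) (hs : IsStep A B k) :
    ResidueOrderPreserving k (zpos A ∘ f) (zpos B ∘ g) := by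
  obtain ⟨a, ha⟩ := h.exists_zpos_eq hs.le
  rw [hs.ncard_skew] at ha
  exact .of_shift_one a ha fun i j hij =>
    congrArg (zpos A) (h.row_eq_of_row_eq ((zpos_strictAnti B).injective hij))

end StepTrack

/-- The position in `s(P)` of the zero labeled `i + 1`. Labels increase from left to right,
whereas rows are counted from the top, that is, from right to left. -/
noncomputable def labelPos (P : Partition) (i : Fin P.length) : ℤ := zpos P (P.length - 1 - i)

theorem labelPos_injective (P : Partition) : Function.Injective (labelPos P) := fun i j hij => by
  have := (zpos_strictAnti P).injective hij
  omega

theorem zpos_empty (n : ℕ) : zpos Partition.empty n = -(n : ℤ) - 1 := by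
  simp [zpos, Partition.empty]

theorem RHT.residueOrderPreserving {P : Partition} {k p : ℕ} (T : RHT P (List.replicate p k))
    (q : Fin ((List.replicate p k).length + 1) → ℕ → ℕ)
    (hlast : ∀ i : ℕ, i < P.length → q (Fin.last _) i = P.length - 1 - i)
    (htrack : ∀ j : Fin (List.replicate p k).length,
      StepTrack (T.chain j.succ) (T.chain j.castSucc) (q j.succ) (q j.castSucc))
    (j : Fin ((List.replicate p k).length + 1)) :
    ResidueOrderPreserving k (labelPos P) fun i => zpos (T.chain j) (q j i) := by
  induction j using Fin.reverseInduction with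
  | last =>
    have hpos : (fun i : Fin P.length => zpos (T.chain (Fin.last _)) (q (Fin.last _) i)) =
        labelPos P := funext fun i => by rw [T.chain_last, hlast i i.2, labelPos]
    rw [hpos]
    exact .refl _ _
  | cast j ih =>
    have hstep : IsStep (T.chain j.succ) (T.chain j.castSucc) k := by simpa using T.step j
    exact ih.trans (((htrack j).residueOrderPreserving hstep).comp Fin.val)

theorem IsZeroPerm.residueOrderPreserving {P : Partition} {k p : ℕ}
    {T : RHT P (List.replicate p k)} {π : Equiv.Perm (Fin P.length)} (h : IsZeroPerm T π) :
    ResidueOrderPreserving k (labelPos P ∘ π) fun i => (i : ℤ) - P.length := by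
  obtain ⟨q, hlast, htrack, hfirst⟩ := h
  have hpos : (fun i : Fin P.length => (i : ℤ) - P.length) =
      (fun i : Fin P.length => zpos (T.chain 0) (q 0 i)) ∘ π := funext fun i => by
    rw [Function.comp_apply, T.chain_zero, hfirst, zpos_empty]
    omega
  rw [hpos]
  exact (T.residueOrderPreserving q hlast htrack 0).comp π

/-- if `λ` has empty `k`-core and `p = |λ|/k`, then all rim hook
tableaux of shape `λ` and type `(k^p)` have the same zero permutation. -/
theorem zeroPerm_unique_for_type_k_pow_p (k p : ℕ) (hk : 2 ≤ k) (P : Partition)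
    (hcore : IsKCore k P Partition.empty) (hp : P.size = k * p)
    (T T' : RHT P (List.replicate p k)) (π π' : Equiv.Perm (Fin P.length))
    (h : IsZeroPerm T π) (h' : IsZeroPerm T' π') : π = π' := by
  let x : Fin P.length → ℤ := fun i => (i : ℤ) - P.length
  let σ : Equiv.Perm (Fin P.length) := π'⁻¹ * π
  have hx : StrictMono x := fun i j hij => by simpa [x] using hij
  have hπ : ResidueOrderPreserving k x (labelPos P ∘ π) :=
    h.residueOrderPreserving.symm ((labelPos_injective P).comp π.injective)
  have hπ' : ResidueOrderPreserving k (labelPos P ∘ π) (x ∘ σ) := by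
    have hcomp : labelPos P ∘ π = (labelPos P ∘ π') ∘ σ := funext fun i => by simp [σ]
    rw [hcomp]
    exact h'.residueOrderPreserving.comp σ
  have hσ : σ = 1 := (hπ.trans hπ').perm_eq_one hx
  exact (inv_mul_eq_one.mp hσ).symm

end RimHookPaper
end
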